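/- Characterization of the cone C ∩ 00 (Table 2): a vector α ∈ ℝ^7 with components (α_A, α_B, α_V, α_AB, α_AV, α_BV, α_ABV) is 0A-valid, 0B-valid, and satisfies α_V + α_AV + α_BV + α_ABV ≥ 0 if and only if α is a nonnegative real linear combination of the six vectors (0,0,1,0,0,0,0), (1,1,0,−1,0,0,0), (0,0,−1,0,1,1,−1), (0,0,1,1,0,0,−1), (0,1,1,0,0,−1,0), (1,0,1,0,−1,0,0). -/

import Mathlib

/-- Strong subadditivity for an entropy function `S` on subsets of the party set `P`:
for pairwise disjoint `X Y Z`, `S(X∪Z) + S(Y∪Z) ≥ S(X∪Y∪Z) + S(Z)`. -/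
def SSAfn {P : Type} [DecidableEq P] (S : Finset P → ℝ) : Prop :=
  ∀ X Y Z : Finset P, Disjoint X Y → Disjoint X Z → Disjoint Y Z →
    S (X ∪ Z) + S (Y ∪ Z) ≥ S (X ∪ Y ∪ Z) + S Z

/-- Weak monotonicity for an entropy function `S` on subsets of the party set `P`:
for pairwise disjoint `X Y Z`, `S(X∪Z) + S(Y∪Z) ≥ S(X) + S(Y)`. -/
def WMfn {P : Type} [DecidableEq P] (S : Finset P → ℝ) : Prop :=
  ∀ X Y Z : Finset P, Disjoint X Y → Disjoint X Z → Disjoint Y Z →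
    S (X ∪ Z) + S (Y ∪ Z) ≥ S X + S Y

/-- `α ∈ ℝ^7` (components ordered `α_A, α_B, α_V, α_AB, α_AV, α_BV, α_ABV`) is 0A-valid:
for every entropy function on the four parties `0 = A1`, `1 = A2`, `2 = B`, `3 = V`
satisfying SSA and WM,
`α_A S_{A2|A1} + α_AB S_{A2|A1B} + α_AV S_{A2|A1V} + α_ABV S_{A2|A1BV} ≥ 0`. -/
def Valid0A (α : Fin 7 → ℝ) : Prop :=
  ∀ S : Finset (Fin 4) → ℝ, S ∅ = 0 → SSAfn S → WMfn S →
    α 0 * (S {0, 1} - S {0}) + α 3 * (S {0, 1, 2} - S {0, 2}) +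
      α 4 * (S {0, 1, 3} - S {0, 3}) + α 6 * (S {0, 1, 2, 3} - S {0, 2, 3}) ≥ 0

/-- `α ∈ ℝ^7` is 1A-valid: for every entropy function on the four parties
`0 = A1`, `1 = A2`, `2 = B`, `3 = V` satisfying SSA and WM,
`α_A S_{A2|A1} + α_AB S_{A2|A1B} − α_BV S_{A2|BV} − α_V S_{A2|V} ≥ 0`. -/
def Valid1A (α : Fin 7 → ℝ) : Prop :=
  ∀ S : Finset (Fin 4) → ℝ, S ∅ = 0 → SSAfn S → WMfn S →
    α 0 * (S {0, 1} - S {0}) + α 3 * (S {0, 1, 2} - S {0, 2}) -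
      α 5 * (S {1, 2, 3} - S {2, 3}) - α 2 * (S {1, 3} - S {3}) ≥ 0

/-- `α ∈ ℝ^7` is 0B-valid: for every entropy function on the four parties
`0 = A`, `1 = B1`, `2 = B2`, `3 = V` satisfying SSA and WM,
`α_B S_{B2|B1} + α_AB S_{B2|B1A} + α_BV S_{B2|B1V} + α_ABV S_{B2|B1AV} ≥ 0`. -/
def Valid0B (α : Fin 7 → ℝ) : Prop :=
  ∀ S : Finset (Fin 4) → ℝ, S ∅ = 0 → SSAfn S → WMfn S →
    α 1 * (S {1, 2} - S {1}) + α 3 * (S {0, 1, 2} - S {0, 1}) +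
      α 5 * (S {1, 2, 3} - S {1, 3}) + α 6 * (S {0, 1, 2, 3} - S {0, 1, 3}) ≥ 0

/-!
Every functional occurring in 0A- and 0B-validity has the form
`p S_{y|x} + q S_{y|xu} + r S_{y|xv} + s S_{y|xuv}`. Conditioning decreases entropy, so it is
non-negative whenever `p + q + r + s = 0` and `p, p + q, p + r, -s` are non-negative: it is then
a non-negative combination of conditional mutual informations. Classical bits shared by some of
the parties and GHZ states show that these conditions are necessary. What remains is linear
algebra in `ℝ^7`: the only freedom in writing `α` as a combination of the rays is the weight `t`
of `(1, 1, 0, -1, 0, 0, 0)`, constrained by `max 0 (-α_AB) ≤ t ≤ min α_A α_B` and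
`t ≤ -α_AB - α_ABV`.
-/

section EntropyFunctions

variable {P : Type} [DecidableEq P] {S : Finset P → ℝ}

theorem SSAfn.of_submodular (hS : ∀ A B, S (A ∪ B) + S (A ∩ B) ≤ S A + S B) : SSAfn S := by
  intro X Y Z hXY _ _
  have h_union : (X ∪ Z) ∪ (Y ∪ Z) = X ∪ Y ∪ Z := (Finset.union_union_distrib_right X Y Z).symm
  have h_inter : (X ∪ Z) ∩ (Y ∪ Z) = Z := by
    rw [← Finset.inter_union_distrib_right, Finset.disjoint_iff_inter_eq_empty.mp hXY,
      Finset.empty_union]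
  simpa only [h_union, h_inter] using hS (X ∪ Z) (Y ∪ Z)

theorem WMfn.of_monotone (hS : Monotone S) : WMfn S := fun _ _ _ _ _ _ =>
  add_le_add (hS Finset.subset_union_left) (hS Finset.subset_union_left)

theorem WMfn.of_submodular_of_sdiff {T : Finset P}
    (hS : ∀ A B, S (A ∪ B) + S (A ∩ B) ≤ S A + S B) (h_sdiff : ∀ A, S (T \ A) = S A) :
    WMfn S := by
  intro X Y Z hXY hXZ hYZ
  -- Purity on `T` turns `S (Y ∪ Z)` into the entropy of the complement of `Y ∪ Z`, which meets
  -- `X ∪ Z` in `X` and covers, together with it, the complement of `Y`.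
  have h_union : T \ ((X ∪ Z) ∪ T \ (Y ∪ Z)) = T \ (T \ Y) := by
    grind [Finset.disjoint_left]
  have h_inter : (X ∪ Z) ∩ (T \ (Y ∪ Z)) = T \ (T \ X) := by
    grind [Finset.disjoint_left]
  calc
    S X + S Y = S ((X ∪ Z) ∪ T \ (Y ∪ Z)) + S ((X ∪ Z) ∩ (T \ (Y ∪ Z))) := by
      rw [← h_sdiff (_ ∪ T \ _), h_union, h_inter, h_sdiff, h_sdiff, h_sdiff, h_sdiff, add_comm]
    _ ≤ S (X ∪ Z) + S (T \ (Y ∪ Z)) := hS _ _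
    _ = S (X ∪ Z) + S (Y ∪ Z) := by rw [h_sdiff]

/-- The conditional entropy `S_{X|Y} = S_{XY} - S_Y`, in terms of which the validity conditions
are stated. -/
def condEntropy (S : Finset P → ℝ) (X Y : Finset P) : ℝ := S (X ∪ Y) - S Y

theorem SSAfn.condEntropy_anti (hS : SSAfn S) {Y Z W : Finset P} (hZW : Z ⊆ W)
    (hYW : Disjoint Y W) : condEntropy S Y W ≤ condEntropy S Y Z := by
  have h := hS Y (W \ Z) Z (hYW.mono_right Finset.sdiff_subset) (hYW.mono_right hZW)
    Finset.sdiff_disjoint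
  rw [Finset.union_assoc, Finset.sdiff_union_of_subset hZW] at h
  unfold condEntropy
  linarith

end EntropyFunctions

section TestStates

variable {P : Type} [DecidableEq P]

/-- The entropy function of a uniformly random classical bit known to exactly the parties
in `T`. -/
def sharedBitEntropy (T A : Finset P) : ℝ := if Disjoint A T then 0 else 1

/-- The entropy function of a GHZ state on the parties in `T`; a pure state, so the entropy
vanishes on `T` as well. -/
def ghzEntropy (T A : Finset P) : ℝ := if Disjoint A T ∨ T ⊆ A then 0 else 1

variable (T : Finset P)

theorem sharedBitEntropy_empty : sharedBitEntropy T ∅ = 0 := by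
  simp [sharedBitEntropy]

theorem monotone_sharedBitEntropy : Monotone (sharedBitEntropy T) := by
  intro A B hAB
  have h_disj : Disjoint B T → Disjoint A T := Disjoint.mono_left hAB
  grind [sharedBitEntropy]

theorem ssafn_sharedBitEntropy : SSAfn (sharedBitEntropy T) := by
  refine .of_submodular fun A B => ?_
  have h_union : Disjoint (A ∪ B) T ↔ Disjoint A T ∧ Disjoint B T := Finset.disjoint_union_left
  have h_left : Disjoint A T → Disjoint (A ∩ B) T := Disjoint.mono_left Finset.inter_subset_left
  have h_right : Disjoint B T → Disjoint (A ∩ B) T := Disjoint.mono_left Finset.inter_subset_right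
  grind [sharedBitEntropy]

theorem wmfn_sharedBitEntropy : WMfn (sharedBitEntropy T) :=
  .of_monotone (monotone_sharedBitEntropy T)

theorem ghzEntropy_empty : ghzEntropy T ∅ = 0 := by
  simp [ghzEntropy]

theorem ghzEntropy_sdiff (A : Finset P) : ghzEntropy T (T \ A) = ghzEntropy T A := by
  have h_disj : Disjoint (T \ A) T ↔ T ⊆ A := by
    rw [← Finset.sdiff_eq_empty_iff_subset, Finset.disjoint_iff_inter_eq_empty,
      Finset.inter_eq_left.mpr Finset.sdiff_subset]
  have h_subset : T ⊆ T \ A ↔ Disjoint A T := by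
    rw [Finset.subset_sdiff, disjoint_comm, and_iff_right Finset.Subset.rfl]
  simp only [ghzEntropy, h_disj, h_subset, or_comm]

theorem ghzEntropy_submodular (A B : Finset P) :
    ghzEntropy T (A ∪ B) + ghzEntropy T (A ∩ B) ≤ ghzEntropy T A + ghzEntropy T B := by
  have h_disj_union : Disjoint (A ∪ B) T ↔ Disjoint A T ∧ Disjoint B T :=
    Finset.disjoint_union_left
  have h_subset_inter : T ⊆ A ∩ B ↔ T ⊆ A ∧ T ⊆ B := Finset.subset_inter_iff
  have h_disj_left : Disjoint A T → Disjoint (A ∩ B) T := .mono_left Finset.inter_subset_left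
  have h_disj_right : Disjoint B T → Disjoint (A ∩ B) T := .mono_left Finset.inter_subset_right
  have h_subset_left (h : T ⊆ A) : T ⊆ A ∪ B := h.trans Finset.subset_union_left
  have h_subset_right (h : T ⊆ B) : T ⊆ A ∪ B := h.trans Finset.subset_union_right
  grind [ghzEntropy]

theorem ssafn_ghzEntropy : SSAfn (ghzEntropy T) :=
  .of_submodular (ghzEntropy_submodular T)

theorem wmfn_ghzEntropy : WMfn (ghzEntropy T) :=
  .of_submodular_of_sdiff (ghzEntropy_submodular T) (ghzEntropy_sdiff T)

end TestStates

/-- The cone of coefficients for which `p S_{y|x} + q S_{y|xu} + r S_{y|xv} + s S_{y|xuv}` is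
non-negative on all entropy functions, given by its facet inequalities. -/
structure CondEntropyCone (p q r s : ℝ) : Prop where
  p_nonneg : 0 ≤ p
  p_add_q_nonneg : 0 ≤ p + q
  p_add_r_nonneg : 0 ≤ p + r
  s_nonpos : s ≤ 0
  sum_eq_zero : p + q + r + s = 0

theorem CondEntropyCone.combination_nonneg {p q r s a b c d : ℝ} (h : CondEntropyCone p q r s)
    (hba : b ≤ a) (hca : c ≤ a) (hdb : d ≤ b) (hdc : d ≤ c) :
    0 ≤ p * a + q * b + r * c + s * d := by
  obtain ⟨hp, hpq, hpr, hs, h_sum⟩ := h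
  obtain rfl : r = -p - q - s := by linarith
  rcases le_total 0 q with hq | hq
  · calc
      0 ≤ p * (a - c) + q * (b - d) + (-q - s) * (c - d) :=
        add_nonneg
          (add_nonneg (mul_nonneg hp (sub_nonneg.2 hca)) (mul_nonneg hq (sub_nonneg.2 hdb)))
          (mul_nonneg (by linarith) (sub_nonneg.2 hdc))
      _ = p * a + q * b + (-p - q - s) * c + s * d := by ring
  · calc
      0 ≤ -q * (a - b) + (p + q) * (a - c) + -s * (c - d) :=
        add_nonneg
          (add_nonneg (mul_nonneg (neg_nonneg.2 hq) (sub_nonneg.2 hba))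
            (mul_nonneg hpq (sub_nonneg.2 hca)))
          (mul_nonneg (neg_nonneg.2 hs) (sub_nonneg.2 hdc))
      _ = p * a + q * b + (-p - q - s) * c + s * d := by ring

theorem forall_condEntropy_combination_nonneg_iff {P : Type} [DecidableEq P]
    {x y u v : P} (hne : [x, y, u, v].Nodup) {p q r s : ℝ} :
    (∀ S : Finset P → ℝ, S ∅ = 0 → SSAfn S → WMfn S →
      0 ≤ p * condEntropy S {y} {x} + q * condEntropy S {y} {x, u} +
        r * condEntropy S {y} {x, v} + s * condEntropy S {y} {x, u, v}) ↔
      CondEntropyCone p q r s := by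
  have hne' : [v, u, y, x].Nodup := List.nodup_reverse.mpr hne
  simp only [List.nodup_cons, List.mem_cons, List.not_mem_nil, not_or, or_false] at hne hne'
  constructor
  · intro h
    have h_bit (T : Finset P) := h _ (sharedBitEntropy_empty T) (ssafn_sharedBitEntropy T)
      (wmfn_sharedBitEntropy T)
    have h_ghz (T : Finset P) := h _ (ghzEntropy_empty T) (ssafn_ghzEntropy T) (wmfn_ghzEntropy T)
    have h_sum_nonneg : 0 ≤ p + q + r + s := by
      simpa [condEntropy, sharedBitEntropy, hne, hne'] using h_bit {y}
    have h_sum_nonpos : 0 ≤ -p + -q + -r + -s := by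
      simpa [condEntropy, ghzEntropy, Finset.subset_iff, hne, hne'] using h_ghz {x, y}
    exact {
      p_nonneg := by
        simpa [condEntropy, sharedBitEntropy, hne, hne'] using h_bit {y, u, v}
      p_add_q_nonneg := by
        simpa [condEntropy, sharedBitEntropy, hne, hne'] using h_bit {y, v}
      p_add_r_nonneg := by
        simpa [condEntropy, sharedBitEntropy, hne, hne'] using h_bit {y, u}
      s_nonpos := by
        simpa [condEntropy, ghzEntropy, Finset.subset_iff, hne, hne']
          using h_ghz {x, y, u, v}
      sum_eq_zero := by linarith }
  · intro h S _ hSSA _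
    refine h.combination_nonneg ?_ ?_ ?_ ?_ <;> apply hSSA.condEntropy_anti <;>
      grind [Finset.disjoint_singleton_left]

theorem valid0A_iff {α : Fin 7 → ℝ} :
    Valid0A α ↔ CondEntropyCone (α 0) (α 3) (α 4) (α 6) := by
  rw [← forall_condEntropy_combination_nonneg_iff (P := Fin 4) (x := 0) (y := 1) (u := 2) (v := 3)
    (by decide)]
  have h_x : ({1} ∪ {0} : Finset (Fin 4)) = {0, 1} := by decide
  have h_xu : ({1} ∪ {0, 2} : Finset (Fin 4)) = {0, 1, 2} := by decide
  have h_xv : ({1} ∪ {0, 3} : Finset (Fin 4)) = {0, 1, 3} := by decide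
  have h_xuv : ({1} ∪ {0, 2, 3} : Finset (Fin 4)) = {0, 1, 2, 3} := by decide
  simp only [Valid0A, condEntropy, ge_iff_le, h_x, h_xu, h_xv, h_xuv]

theorem valid0B_iff {α : Fin 7 → ℝ} :
    Valid0B α ↔ CondEntropyCone (α 1) (α 3) (α 5) (α 6) := by
  rw [← forall_condEntropy_combination_nonneg_iff (P := Fin 4) (x := 1) (y := 2) (u := 0) (v := 3)
    (by decide)]
  have h_u : ({1, 0} : Finset (Fin 4)) = {0, 1} := by decide
  have h_uv : ({1, 0, 3} : Finset (Fin 4)) = {0, 1, 3} := by decide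
  have h_x : ({2} ∪ {1} : Finset (Fin 4)) = {1, 2} := by decide
  have h_xu : ({2} ∪ {0, 1} : Finset (Fin 4)) = {0, 1, 2} := by decide
  have h_xv : ({2} ∪ {1, 3} : Finset (Fin 4)) = {1, 2, 3} := by decide
  have h_xuv : ({2} ∪ {0, 1, 3} : Finset (Fin 4)) = {0, 1, 2, 3} := by decide
  simp only [Valid0B, condEntropy, ge_iff_le, h_u, h_uv, h_x, h_xu, h_xv, h_xuv]

/-- The six rays of Table 2 that generate `C ∩ 00`, with components in the order
`α_A, α_B, α_V, α_AB, α_AV, α_BV, α_ABV`. -/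
def raysC00 : Fin 6 → Fin 7 → ℝ :=
  ![![0, 0, 1, 0, 0, 0, 0], ![1, 1, 0, -1, 0, 0, 0], ![0, 0, -1, 0, 1, 1, -1],
    ![0, 0, 1, 1, 0, 0, -1], ![0, 1, 1, 0, 0, -1, 0], ![1, 0, 1, 0, -1, 0, 0]]

theorem sum_smul_raysC00 (c : Fin 6 → ℝ) :
    ∑ i, c i • raysC00 i = ![c 1 + c 5, c 1 + c 4, c 0 - c 2 + c 3 + c 4 + c 5, c 3 - c 1,
      c 2 - c 5, c 2 - c 4, -c 2 - c 3] := by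
  ext j
  fin_cases j <;>
    simp only [raysC00, Finset.sum_apply, Pi.smul_apply, smul_eq_mul, Fin.sum_univ_six,
      Fin.zero_eta, Fin.mk_one, Fin.reduceFinMk, Matrix.cons_val] <;>
    ring

theorem exists_nonneg_eq_sum_smul_raysC00 {α : Fin 7 → ℝ}
    (hA : CondEntropyCone (α 0) (α 3) (α 4) (α 6)) (hB : CondEntropyCone (α 1) (α 3) (α 5) (α 6))
    (hV : 0 ≤ α 2 + α 4 + α 5 + α 6) :
    ∃ c : Fin 6 → ℝ, (∀ i, 0 ≤ c i) ∧ α = ∑ i, c i • raysC00 i := by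
  simp only [sum_smul_raysC00]
  obtain ⟨hA, hA_AB, hA_AV, h_ABV, hA_sum⟩ := hA
  obtain ⟨hB, hB_AB, -, -, hB_sum⟩ := hB
  obtain ⟨t, ht, ht_AB, htA, htB, ht_ABV⟩ : ∃ t, 0 ≤ t ∧ -α 3 ≤ t ∧ t ≤ α 0 ∧ t ≤ α 1 ∧
      t ≤ -α 3 - α 6 := by
    refine ⟨max 0 (-α 3), le_max_left _ _, le_max_right _ _, ?_, ?_, ?_⟩ <;> apply max_le <;>
      linarith
  refine ⟨![α 2 + α 4 + α 5 + α 6, t, -α 3 - α 6 - t, α 3 + t, α 1 - t, α 0 - t], ?_, ?_⟩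
  · intro i
    fin_cases i <;> simp only [Fin.zero_eta, Fin.mk_one, Fin.reduceFinMk, Matrix.cons_val] <;>
      linarith
  · ext j
    fin_cases j <;> simp only [Fin.zero_eta, Fin.mk_one, Fin.reduceFinMk, Matrix.cons_val] <;>
      linarith

/-- Characterization of the cone `C ∩ 00`: `α` is 0A-valid, 0B-valid and non-negative in
`V` iff it is a nonnegative linear combination of the six extreme rays of Table 2. -/
theorem coneC00_characterization (α : Fin 7 → ℝ) :
    (Valid0A α ∧ Valid0B α ∧ α 2 + α 4 + α 5 + α 6 ≥ 0) ↔
      ∃ c : Fin 6 → ℝ, (∀ i, 0 ≤ c i) ∧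
        α = ∑ i, c i • (![![0, 0, 1, 0, 0, 0, 0], ![1, 1, 0, -1, 0, 0, 0],
          ![0, 0, -1, 0, 1, 1, -1], ![0, 0, 1, 1, 0, 0, -1], ![0, 1, 1, 0, 0, -1, 0],
          ![1, 0, 1, 0, -1, 0, 0]] : Fin 6 → Fin 7 → ℝ) i := by
  change _ ↔ ∃ c : Fin 6 → ℝ, (∀ i, 0 ≤ c i) ∧ α = ∑ i, c i • raysC00 i
  rw [valid0A_iff, valid0B_iff]
  constructor
  · rintro ⟨hA, hB, hV⟩
    exact exists_nonneg_eq_sum_smul_raysC00 hA hB hV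
  · rintro ⟨c, hc, rfl⟩
    rw [sum_smul_raysC00]
    refine ⟨⟨?_, ?_, ?_, ?_, ?_⟩, ⟨?_, ?_, ?_, ?_, ?_⟩, ?_⟩ <;> simp only [Matrix.cons_val] <;>
      linarith [hc 0, hc 1, hc 2, hc 3, hc 4, hc 5]
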